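/- Limsup rotation set bound: For lifts f̃, g̃ ∈ Homeo(ℝ², ℤ²) of torus homeomorphisms f, g, every limit point of the sets (1/n)·Rot(f̃ g̃ⁿ) (as n → ∞, in the Hausdorff topology) is contained in Rot(g̃); equivalently, for every ε > 0 there is N such that for all n ≥ N, (1/n)·Rot(f̃ g̃ⁿ) is contained in the ε-neighborhood of Rot(g̃). -/

import Mathlib

open Filter Pointwise

/-- `f` commutes with the integer translations of the plane. -/
def CommutesWithIntTranslations (f : ℝ × ℝ → ℝ × ℝ) : Prop :=
  ∀ (x : ℝ × ℝ) (p q : ℤ), f (x + ((p : ℝ), (q : ℝ))) = f x + ((p : ℝ), (q : ℝ))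

/-- The Misiurewicz–Ziemian rotation set of a lift `f`. -/
def RotSet (f : ℝ × ℝ → ℝ × ℝ) : Set (ℝ × ℝ) :=
  {v | ∃ (x : ℕ → ℝ × ℝ) (nk : ℕ → ℕ), Tendsto nk atTop atTop ∧
    Tendsto (fun k => ((nk k : ℝ))⁻¹ • (f^[nk k] (x k) - x k)) atTop (nhds v)}

/-!
The set of displacements `h x - x` of an injective lift `h` is convex up to a bounded error that
does not depend on `h`. Indeed, up to such an error it is the image under `h` of a fundamental
square, and two distinct points of this image never differ by an integer vector. But if a continuous
image of a simply connected space in `ℂ` stays far from a point `p` of its convex hull, then it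
contains a curve making a half-turn around `p`, and a logarithm argument in the spirit of the
universal chord theorem shows that two points of this curve differ by a nonzero integer vector.

A rotation vector of `f ∘ gⁿ` is a limit of averages of its displacements, so it lies within a
bounded distance of the convex hull of the displacements of `gⁿ`, and hence of these displacements
themselves. After division by `n` the error disappears, and the points `(gⁿ x - x) / n` accumulate
only on the rotation set of `g`.
-/

open Set Metric Complex

section FirstHit

variable {α β : Type*} [ConditionallyCompleteLinearOrder α] [TopologicalSpace α] [OrderTopology α]
  [DenselyOrdered α] [LinearOrder β] [TopologicalSpace β] [OrderClosedTopology β]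
  {θ : α → β} {x y : α} {c d : β}

lemma exists_first_eq (hxy : x ≤ y) (hθ : ContinuousOn θ (Icc x y)) (hx : θ x ≤ d)
    (hy : d ≤ θ y) : ∃ b ∈ Icc x y, θ b = d ∧ ∀ t ∈ Icc x b, θ t ≤ d := by
  obtain ⟨b, ⟨hb, hbd⟩, hleast⟩ : ∃ b, IsLeast (Icc x y ∩ θ ⁻¹' {d}) b :=
    (isCompact_Icc.of_isClosed_subset (hθ.preimage_isClosed_of_isClosed isClosed_Icc
      isClosed_singleton) inter_subset_left).exists_isLeast
      (intermediate_value_Icc hxy hθ ⟨hx, hy⟩)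
  refine ⟨b, hb, hbd, fun t ht ↦ le_of_not_gt fun hdt ↦ ?_⟩
  obtain ⟨s, hs, hsd⟩ := intermediate_value_Icc ht.1
    (hθ.mono (Icc_subset_Icc_right (ht.2.trans hb.2))) ⟨hx, hdt.le⟩
  have hbs : b ≤ s := hleast ⟨⟨hs.1, hs.2.trans (ht.2.trans hb.2)⟩, hsd⟩
  obtain rfl : t = s := le_antisymm (ht.2.trans hbs) hs.2
  exact hdt.ne' hsd

lemma exists_last_eq (hxy : x ≤ y) (hθ : ContinuousOn θ (Icc x y)) (hx : θ x ≤ c)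
    (hy : c ≤ θ y) : ∃ a ∈ Icc x y, θ a = c ∧ ∀ t ∈ Icc a y, c ≤ θ t := by
  obtain ⟨a, ha, hac, hmin⟩ := exists_first_eq (α := αᵒᵈ) (β := βᵒᵈ)
    (θ := OrderDual.toDual ∘ θ ∘ OrderDual.ofDual) (x := OrderDual.toDual y)
    (y := OrderDual.toDual x) (d := OrderDual.toDual c) hxy (by rwa [Icc_toDual]) hy hx
  exact ⟨a, ha.symm, hac, fun t ht ↦ hmin t ht.symm⟩

lemma exists_crossing_interval (hxy : x ≤ y) (hθ : ContinuousOn θ (Icc x y)) (hx : θ x ≤ c)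
    (hcd : c ≤ d) (hy : d ≤ θ y) :
    ∃ a b, a ≤ b ∧ θ a = c ∧ θ b = d ∧ MapsTo θ (Icc a b) (Icc c d) := by
  obtain ⟨b, hb, hbd, hle⟩ := exists_first_eq hxy hθ (hx.trans hcd) hy
  obtain ⟨a, ha, hac, hge⟩ := exists_last_eq hb.1 (hθ.mono (Icc_subset_Icc_right hb.2)) hx
    (hcd.trans_eq hbd.symm)
  exact ⟨a, b, ha.2, hac, hbd, fun t ht ↦ ⟨hge t ht, hle t ⟨ha.1.trans ht.1, ht.2⟩⟩⟩

end FirstHit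

section Logarithm

variable {X : Type*}

lemma exists_continuous_exp_eq [TopologicalSpace X] [SimplyConnectedSpace X]
    [LocallyPathConnectedSpace X] {f : X → ℂ} (hf : Continuous f) (h0 : ∀ x, f x ≠ 0) :
    ∃ L : X → ℂ, Continuous L ∧ ∀ x, exp (L x) = f x := by
  obtain ⟨x₀⟩ : Nonempty X := inferInstance
  obtain ⟨L, ⟨-, hL⟩, -⟩ := isCoveringMapOn_exp.existsUnique_continuousMap_lifts
    (⟨f, hf⟩ : C(X, ℂ)) (exp_log (h0 x₀)) h0
  exact ⟨L, L.continuous, congrFun hL⟩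

lemma sub_eq_sub_of_exp_eq_mul_exp [TopologicalSpace X] [PreconnectedSpace X] {L M : X → ℂ}
    (hL : Continuous L) (hM : Continuous M) {c : ℂ} (h : ∀ x, exp (L x) = c * exp (M x))
    (x y : X) : L x - L y = M x - M y := by
  have hexp (x : X) : exp (L x - M x) = c := by
    rw [exp_sub, h, mul_div_cancel_right₀ _ (exp_ne_zero _)]
  have hconst : L x - M x = L y - M y :=
    isCoveringMap_exp.const_of_comp (hL.sub hM) (fun s t ↦ Subtype.ext (by simp [hexp])) x y
  linear_combination hconst

lemma exists_im_add_pi_le_of_mem_convexHull {Γ L : X → ℂ} {p : ℂ}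
    (hL : ∀ x, exp (L x) = Γ x - p) (hp : p ∈ convexHull ℝ (range Γ)) :
    ∃ x y, (L x).im + Real.pi ≤ (L y).im := by
  by_contra! hlt
  obtain ⟨ι, _, w, z, hw, hw1, hz, hsum⟩ := mem_convexHull_iff_exists_fintype.mp hp
  choose x hx using hz
  have : Nonempty ι := by
    by_contra h
    simp [not_nonempty_iff.mp h] at hw1
  obtain ⟨i, hi⟩ := Finite.exists_min fun k ↦ (L (x k)).im
  obtain ⟨j, hj⟩ := Finite.exists_max fun k ↦ (L (x k)).im
  -- All points `z k - p` make an angle less than `π / 2` with the direction `exp (μ * I)`.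
  obtain ⟨μ, hμ⟩ : ∃ μ : ℝ, μ = ((L (x i)).im + (L (x j)).im) / 2 := ⟨_, rfl⟩
  let H : Set ℂ := {w | (p * exp (-(μ * I))).re < (w * exp (-(μ * I))).re}
  have hH : Convex ℝ H :=
    convex_halfSpace_gt ⟨fun _ _ ↦ by simp [add_mul], fun _ _ ↦ by simp [mul_sub, mul_assoc]⟩ _
  have hmem (k : ι) : z k ∈ H := by
    have hcos : 0 < Real.cos ((L (x k)).im - μ) :=
      Real.cos_pos_of_mem_Ioo ⟨by linarith [hi k, hj k, hlt (x i) (x j)],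
        by linarith [hi k, hj k, hlt (x i) (x j)]⟩
    have hre : ((Γ (x k) - p) * exp (-(μ * I))).re =
        Real.exp (L (x k)).re * Real.cos ((L (x k)).im - μ) := by
      rw [← hL, ← exp_add, exp_re]
      simp [sub_eq_add_neg]
    have hpos : 0 < ((Γ (x k) - p) * exp (-(μ * I))).re := hre ▸ by positivity
    rw [sub_mul, sub_re, sub_pos, hx] at hpos
    exact hpos
  have hpH : p ∈ H := hsum ▸ hH.sum_mem (fun k _ ↦ hw k) hw1 fun k _ ↦ hmem k
  exact lt_irrefl (p * exp (-(μ * I))).re hpH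

lemma im_lt_im_of_exp_im_nonpos [TopologicalSpace X] [PreconnectedSpace X] {L : X → ℂ}
    (hL : Continuous L) (him : ∀ x, (exp (L x)).im ≤ 0) {x y : X} (hx : (exp (L x)).re < 0)
    (hy : 0 < (exp (L y)).re) : (L x).im < (L y).im := by
  have hslit (x : X) : I * exp (L x) ∈ slitPlane := by
    have hne : I * exp (L x) ≠ 0 := by simp
    have hre : 0 ≤ (I * exp (L x)).re := by simpa only [I_mul_re, neg_nonneg] using him x
    rcases hre.lt_or_eq with hpos | hzero
    · exact .inl hpos
    · exact .inr fun h ↦ hne (Complex.ext hzero.symm h)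
  have hlog : L y - L x = log (I * exp (L y)) - log (I * exp (L x)) :=
    sub_eq_sub_of_exp_eq_mul_exp (c := -I) (M := fun x ↦ log (I * exp (L x))) hL
      (Continuous.clog (by fun_prop) hslit)
      (fun x ↦ by rw [exp_log (slitPlane_ne_zero (hslit x)), ← mul_assoc]; simp) y x
  have hargx : arg (I * exp (L x)) < 0 := by rwa [arg_neg_iff, I_mul_im]
  have hargy : 0 ≤ arg (I * exp (L y)) := by rw [arg_nonneg_iff, I_mul_im]; exact hy.le
  have hargs := congrArg im hlog
  simp only [sub_im, log_im] at hargs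
  linarith

-- Dog on a leash: a curve closer to `exp ∘ ℓ` than the origin is turns like it, up to `π`.
lemma abs_im_sub_sub_im_sub_lt_pi_of_norm_lt [TopologicalSpace X] [PreconnectedSpace X]
    {L ℓ : X → ℂ} (hL : Continuous L) (hℓ : Continuous ℓ) {e : ℂ}
    (h : ∀ x, exp (L x) = exp (ℓ x) - e) (hlt : ∀ x, ‖e‖ < ‖exp (ℓ x)‖) (x y : X) :
    |(L x - L y).im - (ℓ x - ℓ y).im| < Real.pi := by
  have hre (x : X) : 0 < (1 - e / exp (ℓ x)).re := by
    have : ‖e / exp (ℓ x)‖ < 1 := by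
      rw [norm_div, div_lt_one (by simp)]
      exact hlt x
    simpa only [sub_re, one_re, sub_pos] using (re_le_norm _).trans_lt this
  have hlog := sub_eq_sub_of_exp_eq_mul_exp (c := 1)
    (M := fun x ↦ ℓ x + log (1 - e / exp (ℓ x))) hL
    (hℓ.add (Continuous.clog (by fun_prop (disch := simp)) fun x ↦ .inl (hre x)))
    (fun x ↦ by
      rw [h, exp_add, exp_log (slitPlane_ne_zero (.inl (hre x)))]
      field_simp [exp_ne_zero]) x y
  have hargs := congrArg im hlog
  simp only [sub_im, add_im, log_im] at hargs ⊢
  have harg (x : X) := abs_lt.mp (abs_arg_lt_pi_div_two_iff.mpr (.inl (hre x)))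
  rw [abs_lt]
  constructor <;> linarith [(harg x).1, (harg x).2, (harg y).1, (harg y).2]

end Logarithm

-- Otherwise `(s, t) ↦ exp (ℓ s) - exp (ℓ t) - (e - exp (ℓ a))` has a logarithm on the plane, whose
-- imaginary part is constant on the diagonal and yet increases along `(a, a) → (b, a) → (b, b)`.
lemma exists_exp_sub_exp_eq_of_half_turn {ℓ : ℝ → ℂ} (hℓ : Continuous ℓ)
    (hmem : ∀ t, (ℓ t).im ∈ Icc 0 Real.pi) {a b : ℝ} (ha : (ℓ a).im = 0)
    (hb : (ℓ b).im = Real.pi) {e : ℂ} (he : 0 ≤ e.im) (hlt : ∀ t, ‖e‖ < ‖exp (ℓ t)‖) :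
    ∃ s t, exp (ℓ s) - exp (ℓ t) = e - exp (ℓ a) := by
  by_contra! hne
  obtain ⟨L, hL, hexp⟩ := exists_continuous_exp_eq (X := ℝ × ℝ)
    (f := fun q ↦ exp (ℓ q.1) - exp (ℓ q.2) - (e - exp (ℓ a))) (by fun_prop)
    fun q ↦ sub_ne_zero.mpr (hne q.1 q.2)
  have hdiag : L (a, a) = L (b, b) := by
    simpa [sub_eq_zero] using sub_eq_sub_of_exp_eq_mul_exp (L := fun t ↦ L (t, t)) (M := 0)
      (by fun_prop) continuous_const (c := exp (ℓ a) - e) (by simp [hexp]) a b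
  have hhoriz : (L (a, a)).im < (L (b, a)).im := by
    have hturn := abs_im_sub_sub_im_sub_lt_pi_of_norm_lt (L := fun t ↦ L (t, a)) (by fun_prop) hℓ
      (fun t ↦ by rw [hexp]; ring) hlt b a
    simp only [sub_im, ha, hb, abs_lt] at hturn
    linarith [hturn.1]
  have hvert : (L (b, a)).im < (L (b, b)).im := by
    have him (t : ℝ) : 0 ≤ (exp (ℓ t)).im := by
      rw [exp_im]
      exact mul_nonneg (Real.exp_pos _).le (Real.sin_nonneg_of_mem_Icc (hmem t))
    have hexpa : exp (ℓ a) = ‖exp (ℓ a)‖ := by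
      apply Complex.ext <;> simp [exp_re, exp_im, norm_exp, ha]
    have hexpb : exp (ℓ b) = -‖exp (ℓ b)‖ := by
      apply Complex.ext <;> simp [exp_re, exp_im, norm_exp, hb]
    refine im_lt_im_of_exp_im_nonpos (L := fun t ↦ L (b, t)) (by fun_prop) (fun t ↦ ?_) ?_ ?_
    · rw [hexp, hexpa, hexpb]
      simp only [sub_im, neg_im, ofReal_im]
      linarith [him t]
    · rw [hexp, hexpb]
      simp only [sub_re, neg_re, ofReal_re]
      linarith [neg_abs_le e.re, abs_re_le_norm e, hlt b]
    · rw [hexp, hexpa]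
      simp only [sub_re, ofReal_re]
      linarith [re_le_norm e, hlt a]
  linarith [congrArg im hdiag]

lemma exists_exp_sub_exp_mem_of_half_turn {ℓ : ℝ → ℂ} (hℓ : Continuous ℓ)
    (hmem : ∀ t, (ℓ t).im ∈ Icc 0 Real.pi) {a b : ℝ} (ha : (ℓ a).im = 0)
    (hb : (ℓ b).im = Real.pi) {Λ : Set ℂ} {ρ : ℝ} (hΛ : ∀ w, ∃ v ∈ Λ, ‖w - v‖ ≤ ρ)
    (hbig : ∀ t, 2 * ρ < ‖exp (ℓ t)‖) :
    ∃ s t, exp (ℓ s) - exp (ℓ t) ∈ Λ ∧ exp (ℓ s) ≠ exp (ℓ t) := by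
  -- Aiming at this point puts `v + exp (ℓ a)` within `ρ` of `ρ * I`, so in the upper half-plane.
  obtain ⟨v, hv, hvρ⟩ := hΛ (ρ * I - exp (ℓ a))
  have hρ : 0 ≤ ρ := (norm_nonneg _).trans hvρ
  have hdist : ‖ρ * I - (v + exp (ℓ a))‖ ≤ ρ := by rwa [add_comm, ← sub_sub]
  have hnorm : ‖v + exp (ℓ a)‖ ≤ 2 * ρ := by
    have hρI : ‖(ρ * I : ℂ)‖ = ρ := by simp [hρ]
    linarith [norm_le_norm_add_norm_sub (ρ * I) (v + exp (ℓ a))]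
  have him : 0 ≤ (v + exp (ℓ a)).im := by
    have := (im_le_norm _).trans hdist
    simp only [sub_im, mul_im, ofReal_re, ofReal_im, I_re, I_im] at this
    linarith
  obtain ⟨s, t, hst⟩ := exists_exp_sub_exp_eq_of_half_turn hℓ hmem ha hb him
    fun t ↦ hnorm.trans_lt (hbig t)
  rw [add_sub_cancel_right] at hst
  refine ⟨s, t, hst ▸ hv, fun heq ↦ hnorm.not_gt ?_⟩
  simpa only [← hst, heq, sub_self, zero_add] using hbig a

lemma exists_half_turn {X : Type*} [TopologicalSpace X] [PathConnectedSpace X] {L : X → ℂ}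
    (hL : Continuous L) {x y : X} (hxy : (L x).im + Real.pi ≤ (L y).im) :
    ∃ (ℓ : ℝ → ℂ) (θ a b : ℝ), Continuous ℓ ∧ (∀ t, (ℓ t).im ∈ Icc 0 Real.pi) ∧
      (ℓ a).im = 0 ∧ (ℓ b).im = Real.pi ∧ ∀ t, ∃ x, ℓ t = L x - θ * I := by
  let γ := (PathConnectedSpace.somePath x y).extend
  have hγ : Continuous fun t ↦ L (γ t) := hL.comp (Path.continuous_extend _)
  obtain ⟨a, b, hab, ha, hb, hmaps⟩ := exists_crossing_interval (θ := fun t ↦ (L (γ t)).im)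
    (c := (L x).im) zero_le_one (continuous_im.comp hγ).continuousOn (by simp [γ])
    (le_add_of_nonneg_right Real.pi_pos.le) (by simpa [γ] using hxy)
  refine ⟨fun t ↦ L (γ (projIcc a b hab t)) - (L x).im * I, (L x).im, a, b, ?_, fun t ↦ ?_,
    by simp [ha], by simp [hb], fun t ↦ ⟨_, rfl⟩⟩
  · exact (hγ.comp (continuous_subtype_val.comp continuous_projIcc)).sub continuous_const
  · have := hmaps (projIcc a b hab t).2
    simp only [mem_Icc, sub_im, mul_im, ofReal_re, ofReal_im, I_re, I_im] at this ⊢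
    constructor <;> linarith [this.1, this.2]

theorem exists_norm_sub_le_of_mem_convexHull_range {X : Type*} [TopologicalSpace X]
    [SimplyConnectedSpace X] [LocallyPathConnectedSpace X] {Γ : X → ℂ} (hΓ : Continuous Γ)
    {Λ : Set ℂ} {ρ : ℝ} (hΛ : ∀ w, ∃ v ∈ Λ, ‖w - v‖ ≤ ρ)
    (hsep : ∀ x y, Γ x - Γ y ∈ Λ → Γ x = Γ y) {p : ℂ} (hp : p ∈ convexHull ℝ (range Γ)) :
    ∃ x, ‖Γ x - p‖ ≤ 2 * ρ := by
  by_contra! hfar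
  have hρ : 0 ≤ ρ := (norm_nonneg _).trans (hΛ 0).choose_spec.2
  obtain ⟨L, hL, hexp⟩ := exists_continuous_exp_eq (f := fun x ↦ Γ x - p) (by fun_prop)
    fun x ↦ norm_pos_iff.mp ((by positivity : 0 ≤ 2 * ρ).trans_lt (hfar x))
  obtain ⟨x, y, hxy⟩ := exists_im_add_pi_le_of_mem_convexHull hexp hp
  obtain ⟨ℓ, θ, a, b, hℓ, hmem, ha, hb, hLℓ⟩ := exists_half_turn hL hxy
  choose ξ hξ using hLℓ
  let u := exp (θ * I)
  have hu : ‖u‖ = 1 := norm_exp_ofReal_mul_I θ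
  have hu0 : u ≠ 0 := exp_ne_zero _
  have hexpℓ (t : ℝ) : exp (ℓ t) * u = Γ (ξ t) - p := by
    rw [← hexp, hξ, ← exp_add, sub_add_cancel]
  obtain ⟨s, t, hst, hne⟩ := exists_exp_sub_exp_mem_of_half_turn (Λ := (· * u) ⁻¹' Λ) (ρ := ρ)
    hℓ hmem ha hb (fun w ↦ by
      obtain ⟨v, hv, hvρ⟩ := hΛ (w * u)
      refine ⟨v / u, by simpa [hu0] using hv, ?_⟩
      rwa [← mul_one ‖_‖, ← hu, ← norm_mul, sub_mul, div_mul_cancel₀ _ hu0])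
    (fun t ↦ by simpa [← hexpℓ, hu] using hfar (ξ t))
  rw [mem_preimage, sub_mul, hexpℓ, hexpℓ, sub_sub_sub_cancel_right] at hst
  exact hne (mul_right_cancel₀ hu0 (by rw [hexpℓ, hexpℓ, hsep _ _ hst]))

lemma convexHull_subset_cthickening_convexHull {E : Type*} [SeminormedAddCommGroup E]
    [NormedSpace ℝ E] {s t : Set E} {δ : ℝ} (h : s ⊆ cthickening δ t) :
    convexHull ℝ s ⊆ cthickening δ (convexHull ℝ t) :=
  convexHull_min (h.trans (cthickening_subset_of_subset δ (subset_convexHull ℝ t)))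
    ((convex_convexHull ℝ t).cthickening δ)

lemma smul_cthickening_subset {𝕜 E : Type*} [NormedDivisionRing 𝕜] [SeminormedAddCommGroup E]
    [Module 𝕜 E] [NormSMulClass 𝕜 E] {c : 𝕜} (hc : c ≠ 0) (δ : ℝ) (s : Set E) :
    c • cthickening δ s ⊆ cthickening (‖c‖ * δ) (c • s) := by
  rintro _ ⟨x, hx, rfl⟩
  rw [mem_cthickening_iff] at hx ⊢
  rw [infEDist_smul₀ hc, ENNReal.ofReal_mul (norm_nonneg c), ofReal_norm, ENNReal.smul_def,
    smul_eq_mul]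
  exact mul_le_mul_right hx _

/-- The set of displacements `f x - x` of a self-map `f`; `RotSet f` consists of limits of averages
of its elements. -/
def displacementSet {E : Type*} [Sub E] (f : E → E) : Set E :=
  range fun x ↦ f x - x

/-- The half-open unit square, a fundamental domain for the integer translations of the plane. -/
def unitSquare : Set (ℝ × ℝ) :=
  Ico 0 1 ×ˢ Ico 0 1

lemma convex_unitSquare : Convex ℝ unitSquare :=
  (convex_Ico 0 1).prod (convex_Ico 0 1)

lemma unitSquare_subset_Icc : unitSquare ⊆ Icc 0 1 :=
  fun _ hx ↦ ⟨⟨hx.1.1, hx.2.1⟩, hx.1.2.le, hx.2.2.le⟩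

lemma inv_smul_iterate_sub_mem_convexHull {E : Type*} [AddCommGroup E] [Module ℝ E] (f : E → E)
    {n : ℕ} (hn : n ≠ 0) (x : E) :
    (n : ℝ)⁻¹ • (f^[n] x - x) ∈ convexHull ℝ (displacementSet f) := by
  have htelescope : f^[n] x - x = ∑ i ∈ Finset.range n, (f (f^[i] x) - f^[i] x) := by
    simpa only [Function.iterate_succ_apply', Function.iterate_zero_apply] using
      (Finset.sum_range_sub (fun i ↦ f^[i] x) n).symm
  rw [htelescope, Finset.smul_sum]
  exact (convex_convexHull ℝ _).sum_mem (fun _ _ ↦ by positivity) (by simp [hn])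
    fun i _ ↦ subset_convexHull ℝ _ (mem_range_self (f^[i] x))

lemma displacementSet_comp_subset {E : Type*} [SeminormedAddCommGroup E] {f : E → E} {M : ℝ}
    (hf : displacementSet f ⊆ closedBall 0 M) (h : E → E) :
    displacementSet (f ∘ h) ⊆ cthickening M (displacementSet h) := by
  rintro _ ⟨x, rfl⟩
  refine mem_cthickening_of_dist_le _ (h x - x) _ _ (mem_range_self x) ?_
  simpa [dist_eq_norm] using hf (mem_range_self (h x))

lemma rotSet_subset_closure_convexHull (f : ℝ × ℝ → ℝ × ℝ) :
    RotSet f ⊆ closure (convexHull ℝ (displacementSet f)) := by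
  rintro v ⟨x, n, hn, hlim⟩
  exact mem_closure_of_tendsto hlim ((hn.eventually_ne_atTop 0).mono fun k hk ↦
    inv_smul_iterate_sub_mem_convexHull f hk (x k))

lemma eventually_inv_smul_displacementSet_iterate_subset {g : ℝ × ℝ → ℝ × ℝ}
    (hg : Bornology.IsBounded (displacementSet g)) {ε : ℝ} (hε : 0 < ε) :
    ∀ᶠ n : ℕ in atTop,
      (n : ℝ)⁻¹ • displacementSet g^[n] ⊆ thickening ε (RotSet g) := by
  by_contra hfreq
  obtain ⟨n, hn, hnot⟩ := extraction_of_frequently_atTop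
    ((not_eventually.mp hfreq).and_eventually (eventually_ne_atTop 0))
  have hexists (k : ℕ) :
      ∃ x, (n k : ℝ)⁻¹ • (g^[n k] x - x) ∉ thickening ε (RotSet g) := by
    obtain ⟨_, ⟨_, ⟨x, rfl⟩, rfl⟩, hx⟩ := not_subset.mp (hnot k).1
    exact ⟨x, hx⟩
  choose x hx using hexists
  obtain ⟨v, -, φ, hφ, hlim⟩ := tendsto_subseq_of_bounded (isBounded_convexHull.mpr hg)
    fun k ↦ inv_smul_iterate_sub_mem_convexHull g (hnot k).2 (x k)
  have hv : v ∈ RotSet g := ⟨x ∘ φ, n ∘ φ, (hn.comp hφ).tendsto_atTop, hlim⟩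
  obtain ⟨k, hk⟩ := (hlim.eventually (isOpen_thickening.mem_nhds
    (self_subset_thickening hε _ hv))).exists
  exact hx (φ k) hk

namespace CommutesWithIntTranslations

variable {h : ℝ × ℝ → ℝ × ℝ}

lemma iterate (hh : CommutesWithIntTranslations h) (n : ℕ) :
    CommutesWithIntTranslations h^[n] :=
  fun x p q ↦ (Function.Commute.iterate_left (fun y ↦ hh y p q) n : Function.Commute h^[n]
    (· + ((p : ℝ), (q : ℝ)))) x

lemma displacementSet_eq_image (hh : CommutesWithIntTranslations h) :
    displacementSet h = (fun x ↦ h x - x) '' unitSquare := by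
  refine Subset.antisymm ?_ (image_subset_range _ _)
  rintro _ ⟨x, rfl⟩
  have hfract : ((Int.fract x.1, Int.fract x.2) : ℝ × ℝ) + ((⌊x.1⌋ : ℝ), (⌊x.2⌋ : ℝ)) = x := by
    ext <;> simp
  have hx := hh (Int.fract x.1, Int.fract x.2) ⌊x.1⌋ ⌊x.2⌋
  refine ⟨(Int.fract x.1, Int.fract x.2), ⟨⟨Int.fract_nonneg _, Int.fract_lt_one _⟩,
    Int.fract_nonneg _, Int.fract_lt_one _⟩, ?_⟩
  rw [hfract] at hx
  linear_combination -hx - hfract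

lemma isBounded_displacementSet (hh : CommutesWithIntTranslations h) (hcont : Continuous h) :
    Bornology.IsBounded (displacementSet h) := by
  rw [hh.displacementSet_eq_image]
  exact (isCompact_Icc.image (by fun_prop : Continuous fun x ↦ h x - x)).isBounded.subset
    (image_mono unitSquare_subset_Icc)

lemma eq_of_sub_eq_intCast (hh : CommutesWithIntTranslations h) (hinj : Function.Injective h)
    {x y : ℝ × ℝ} (hx : x ∈ unitSquare) (hy : y ∈ unitSquare) {p q : ℤ}
    (hxy : h x - h y = ((p : ℝ), (q : ℝ))) : x = y := by
  have hxpq : x = y + ((p : ℝ), (q : ℝ)) := hinj (by rw [hh, ← hxy, add_sub_cancel])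
  have heq {s t : ℝ} {m : ℤ} (hs : s ∈ Ico 0 1) (ht : t ∈ Ico 0 1) (hst : s = t + m) :
      s = t := by
    rw [← Int.fract_eq_self.mpr hs, ← Int.fract_eq_self.mpr ht, hst, Int.fract_add_intCast]
  exact Prod.ext (heq hx.1 hy.1 (congrArg Prod.fst hxpq)) (heq hx.2 hy.2 (congrArg Prod.snd hxpq))

lemma convexHull_image_unitSquare_subset (hh : CommutesWithIntTranslations h)
    (hcont : Continuous h) (hinj : Function.Injective h) :
    convexHull ℝ (h '' unitSquare) ⊆ cthickening 2 (h '' unitSquare) := by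
  intro p hp
  have : SimplyConnectedSpace unitSquare := by
    have := convex_unitSquare.contractibleSpace ⟨0, by simp [unitSquare]⟩
    infer_instance
  have : LocallyPathConnectedSpace unitSquare := convex_unitSquare.locallyPathConnectedSpace
  let e := equivRealProdCLM.symm
  have hrange : range (fun x : unitSquare ↦ e (h x)) = e '' (h '' unitSquare) := by
    rw [image_image, image_eq_range]
  have hep : e p ∈ convexHull ℝ (range fun x : unitSquare ↦ e (h x)) := by
    rw [hrange]
    exact (e.toLinearMap.image_convexHull _).subset (mem_image_of_mem e hp)
  let Λ : Set ℂ := range fun m : ℤ × ℤ ↦ e ((m.1 : ℝ), (m.2 : ℝ))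
  have hdense (w : ℂ) : ∃ v ∈ Λ, ‖w - v‖ ≤ 1 := by
    refine ⟨_, ⟨(round w.re, round w.im), rfl⟩, (norm_le_abs_re_add_abs_im _).trans ?_⟩
    have hre := abs_sub_round w.re
    have him := abs_sub_round w.im
    simp only [e, sub_re, sub_im, equivRealProdCLM_symm_apply_re, equivRealProdCLM_symm_apply_im]
    linarith
  have hsep (x y : unitSquare) (hxy : e (h x) - e (h y) ∈ Λ) : e (h x) = e (h y) := by
    obtain ⟨⟨m, n⟩, hmn⟩ := hxy
    rw [← map_sub] at hmn
    rw [hh.eq_of_sub_eq_intCast hinj x.2 y.2 (e.injective hmn).symm]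
  obtain ⟨x, hx⟩ := exists_norm_sub_le_of_mem_convexHull_range (by fun_prop) hdense hsep hep
  refine mem_cthickening_of_dist_le _ (h x) _ _ ⟨x, x.2, rfl⟩ ?_
  calc dist p (h x) = ‖h x - p‖ := dist_eq_norm' p (h x)
    _ ≤ ‖e (h x) - e p‖ := map_sub e (h x) p ▸ equivRealProd_apply_le (e (h x - p))
    _ ≤ 2 := by simpa using hx

lemma convexHull_displacementSet_subset (hh : CommutesWithIntTranslations h)
    (hcont : Continuous h) (hinj : Function.Injective h) :
    convexHull ℝ (displacementSet h) ⊆ cthickening 4 (displacementSet h) := by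
  have hnorm {x : ℝ × ℝ} (hx : x ∈ unitSquare) : ‖x‖ ≤ 1 := by
    rw [Prod.norm_def, Real.norm_of_nonneg hx.1.1, Real.norm_of_nonneg hx.2.1]
    exact max_le hx.1.2.le hx.2.2.le
  have hdisp : displacementSet h ⊆ cthickening 1 (h '' unitSquare) := by
    rw [hh.displacementSet_eq_image]
    rintro _ ⟨x, hx, rfl⟩
    exact mem_cthickening_of_dist_le _ (h x) _ _ ⟨x, hx, rfl⟩ (by simpa using hnorm hx)
  have himage : h '' unitSquare ⊆ cthickening 1 (displacementSet h) := by
    rintro _ ⟨x, hx, rfl⟩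
    exact mem_cthickening_of_dist_le _ (h x - x) _ _ ⟨x, rfl⟩ (by simpa using hnorm hx)
  calc convexHull ℝ (displacementSet h)
      ⊆ cthickening 1 (convexHull ℝ (h '' unitSquare)) :=
        convexHull_subset_cthickening_convexHull hdisp
    _ ⊆ cthickening 1 (cthickening 2 (cthickening 1 (displacementSet h))) :=
        cthickening_subset_of_subset 1 ((hh.convexHull_image_unitSquare_subset hcont hinj).trans
          (cthickening_subset_of_subset 2 himage))
    _ = cthickening 4 (displacementSet h) := by
        rw [cthickening_cthickening, cthickening_cthickening] <;> norm_num

lemma rotSet_comp_subset (hh : CommutesWithIntTranslations h) (hcont : Continuous h)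
    (hinj : Function.Injective h) {f : ℝ × ℝ → ℝ × ℝ} {M : ℝ} (hM : 0 ≤ M)
    (hf : displacementSet f ⊆ closedBall 0 M) :
    RotSet (f ∘ h) ⊆ cthickening (M + 4) (displacementSet h) :=
  calc RotSet (f ∘ h)
      ⊆ closure (convexHull ℝ (displacementSet (f ∘ h))) := rotSet_subset_closure_convexHull _
    _ ⊆ cthickening M (convexHull ℝ (displacementSet h)) :=
        closure_minimal (convexHull_subset_cthickening_convexHull
          (displacementSet_comp_subset hf h)) isClosed_cthickening
    _ ⊆ cthickening M (cthickening 4 (displacementSet h)) :=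
        cthickening_subset_of_subset M (hh.convexHull_displacementSet_subset hcont hinj)
    _ ⊆ cthickening (M + 4) (displacementSet h) :=
        cthickening_cthickening_subset hM (by norm_num) _

end CommutesWithIntTranslations

theorem stmt12_general {f g : ℝ × ℝ → ℝ × ℝ} (hf : Bornology.IsBounded (displacementSet f))
    (hg : CommutesWithIntTranslations g) (hcont : Continuous g) (hinj : Function.Injective g) :
    ∀ ε > (0 : ℝ), ∃ N : ℕ, ∀ n ≥ N,
      (n : ℝ)⁻¹ • RotSet (f ∘ g^[n]) ⊆ thickening ε (RotSet g) := by
  intro ε hε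
  obtain ⟨M, hM, hfM⟩ := hf.subset_closedBall_lt 0 0
  have hsmall : ∀ᶠ n : ℕ in atTop, ‖(n : ℝ)⁻¹‖ * (M + 4) < ε / 2 := by
    simpa [inv_mul_eq_div] using
      (tendsto_const_div_atTop_nhds_zero_nat (M + 4)).eventually_lt_const (half_pos hε)
  rw [← eventually_atTop]
  filter_upwards [hsmall, eventually_ne_atTop 0, eventually_inv_smul_displacementSet_iterate_subset
    (hg.isBounded_displacementSet hcont) (half_pos hε)] with n hn hn0 hdisp
  calc (n : ℝ)⁻¹ • RotSet (f ∘ g^[n])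
      ⊆ (n : ℝ)⁻¹ • cthickening (M + 4) (displacementSet g^[n]) :=
        smul_set_mono ((hg.iterate n).rotSet_comp_subset (hcont.iterate n) (hinj.iterate n)
          hM.le hfM)
    _ ⊆ cthickening (‖(n : ℝ)⁻¹‖ * (M + 4)) ((n : ℝ)⁻¹ • displacementSet g^[n]) :=
        smul_cthickening_subset (by positivity) _ _
    _ ⊆ thickening (ε / 2) (thickening (ε / 2) (RotSet g)) :=
        (cthickening_subset_thickening' (half_pos hε) hn _).trans
          (thickening_subset_of_subset _ hdisp)
    _ ⊆ thickening ε (RotSet g) := by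
        simpa only [add_halves] using thickening_thickening_subset (ε / 2) (ε / 2) (RotSet g)

/-- Limsup rotation set bound: for every `ε > 0`, for all large `n`, the scaled
rotation set `(1/n) • Rot(f ∘ gⁿ)` lies in the `ε`-neighborhood of `Rot(g)`. -/
theorem stmt12 (f g : ℝ × ℝ ≃ₜ ℝ × ℝ)
    (hf : CommutesWithIntTranslations ⇑f) (hg : CommutesWithIntTranslations ⇑g) :
    ∀ ε > (0 : ℝ), ∃ N : ℕ, ∀ n ≥ N,
      ((n : ℝ))⁻¹ • RotSet (⇑f ∘ (⇑g)^[n]) ⊆ Metric.thickening ε (RotSet ⇑g) :=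
  stmt12_general (hf.isBounded_displacementSet f.continuous) hg g.continuous g.injective
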